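/- For every integer b ≥ 0, the polynomial P_{b+1} also satisfies the Bazhanov–Sergeev recursion P_{b+1}(x,y,z) = (1−x)·(1−z)·P_b(q^{−2}x,y,q^{−2}z) − q^{−2b}·x·z·(1−y)·P_b(x,q^{−2}y,z). -/

import Mathlib

noncomputable section

open MvPolynomial

/-- The field `K = ℚ(q)` of rational functions in `q` over `ℚ`. -/
abbrev K : Type := RatFunc ℚ

/-- The variable `q ∈ K = ℚ(q)`. -/
def q : K := RatFunc.X

/-- The polynomial ring `K[x,y,z]`. -/
abbrev P3 : Type := MvPolynomial (Fin 3) K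

/-- The polynomials `P_b(x,y,z)`, defined by `P_0 = 1` and
`P_{b+1}(x,y,z) = (1−z)·P_b(x,y,q^{−2}z) − q^{−2b}·x·(1 − q^{−2b}·y·z)·P_b(x,y,z)`. -/
def P : ℕ → P3
  | 0 => 1
  | b + 1 =>
      (1 - X 2) * (aeval ![(X 0 : P3), X 1, C (q ^ (-2 : ℤ)) * X 2] (P b))
    - C (q ^ (-2 * (b : ℤ))) * X 0 * (1 - C (q ^ (-2 * (b : ℤ))) * X 1 * X 2) * P b

/-- the substitution `z ↦ q⁻² z` -/
def sZ : P3 →ₐ[K] P3 := aeval ![(X 0 : P3), X 1, C (q ^ (-2 : ℤ)) * X 2]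
/-- the substitution `x ↦ q⁻² x, z ↦ q⁻² z` -/
def sXZ : P3 →ₐ[K] P3 := aeval ![C (q ^ (-2 : ℤ)) * (X 0 : P3), X 1, C (q ^ (-2 : ℤ)) * X 2]
/-- the substitution `y ↦ q⁻² y` -/
def sY : P3 →ₐ[K] P3 := aeval ![(X 0 : P3), C (q ^ (-2 : ℤ)) * X 1, X 2]

lemma s_C (f : P3 →ₐ[K] P3) (c : K) : f (C c) = C c := f.commutes c

lemma sZ0 : sZ (X 0) = X 0 := by simp [sZ]
lemma sZ1 : sZ (X 1) = X 1 := by simp [sZ]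
lemma sZ2 : sZ (X 2) = C (q ^ (-2 : ℤ)) * X 2 := by simp only [sZ, aeval_X]; rfl
lemma sXZ0 : sXZ (X 0) = C (q ^ (-2 : ℤ)) * X 0 := by simp only [sXZ, aeval_X]; rfl
lemma sXZ1 : sXZ (X 1) = X 1 := by simp [sXZ]
lemma sXZ2 : sXZ (X 2) = C (q ^ (-2 : ℤ)) * X 2 := by simp only [sXZ, aeval_X]; rfl
lemma sY0 : sY (X 0) = X 0 := by simp [sY]
lemma sY1 : sY (X 1) = C (q ^ (-2 : ℤ)) * X 1 := by simp only [sY, aeval_X]; rfl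
lemma sY2 : sY (X 2) = X 2 := by simp [sY]

lemma sZ_sXZ (p : P3) : sZ (sXZ p) = sXZ (sZ p) := by
  have h : sZ.comp sXZ = sXZ.comp sZ := by
    apply MvPolynomial.algHom_ext
    rw [Fin.forall_fin_succ, Fin.forall_fin_two]
    refine ⟨?_, ?_, ?_⟩
    · change sZ (sXZ (X 0)) = sXZ (sZ (X 0))
      simp only [map_mul, s_C, sZ0, sXZ0]
    · change sZ (sXZ (X 1)) = sXZ (sZ (X 1))
      simp only [sZ1, sXZ1]
    · change sZ (sXZ (X 2)) = sXZ (sZ (X 2))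
      simp only [map_mul, s_C, sZ2, sXZ2]
  exact DFunLike.congr_fun h p

lemma sZ_sY (p : P3) : sZ (sY p) = sY (sZ p) := by
  have h : sZ.comp sY = sY.comp sZ := by
    apply MvPolynomial.algHom_ext
    rw [Fin.forall_fin_succ, Fin.forall_fin_two]
    refine ⟨?_, ?_, ?_⟩
    · change sZ (sY (X 0)) = sY (sZ (X 0))
      simp only [sZ0, sY0]
    · change sZ (sY (X 1)) = sY (sZ (X 1))
      simp only [map_mul, s_C, sZ1, sY1]
    · change sZ (sY (X 2)) = sY (sZ (X 2))
      simp only [map_mul, s_C, sZ2, sY2]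
  exact DFunLike.congr_fun h p

lemma q_succ (b : ℕ) : (C (q ^ (-2 * ((b + 1 : ℕ) : ℤ))) : P3)
    = C (q ^ (-2 : ℤ)) * C (q ^ (-2 * (b : ℤ))) := by
  have hq : q ≠ 0 := RatFunc.X_ne_zero
  rw [← C_mul, ← zpow_add₀ hq]
  congr 2
  push_cast
  ring

lemma P_succ (b : ℕ) : P (b + 1) = (1 - X 2) * sZ (P b)
    - C (q ^ (-2 * (b : ℤ))) * X 0 * (1 - C (q ^ (-2 * (b : ℤ))) * X 1 * X 2) * P b := rfl

lemma P_BS_aux (b : ℕ) : P (b + 1) = (1 - X 0) * (1 - X 2) * sXZ (P b)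
      - C (q ^ (-2 * (b : ℤ))) * X 0 * X 2 * (1 - X 1) * sY (P b) := by
  induction b with
  | zero =>
    rw [P_succ]
    simp only [P, map_one, Nat.cast_zero, mul_zero, zpow_zero]
    ring
  | succ b ih =>
    rw [P_succ (b + 1)]
    conv_lhs => rw [ih]
    conv_rhs => rw [P_succ b]
    simp only [map_mul, map_sub, map_one, s_C, sZ0, sZ1, sZ2, sXZ0, sXZ1, sXZ2, sY0, sY1, sY2,
      sZ_sXZ, sZ_sY, q_succ]
    ring

/-- the Bazhanov–Sergeev recursion
`P_{b+1}(x,y,z) = (1−x)(1−z)·P_b(q^{−2}x,y,q^{−2}z) − q^{−2b}·x·z·(1−y)·P_b(x,q^{−2}y,z)`. -/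
theorem P_BS (b : ℕ) :
    P (b + 1) =
      (1 - X 0) * (1 - X 2)
          * aeval ![C (q ^ (-2 : ℤ)) * (X 0 : P3), X 1, C (q ^ (-2 : ℤ)) * X 2] (P b)
      - C (q ^ (-2 * (b : ℤ))) * X 0 * X 2 * (1 - X 1)
          * aeval ![(X 0 : P3), C (q ^ (-2 : ℤ)) * X 1, X 2] (P b) := by
  exact P_BS_aux b
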